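/- There exists a compact subset E of ℝ^d such that E has Hausdorff dimension d and such that for every Borel measure μ on ℝ^d with μ(E) > 0, every p ∈ (1,2] and every q ∈ [1,∞], the supremum over nonzero Schwartz functions f of ‖f̂‖_{L^q(μ)} / ‖f‖_{L^p(ℝ^d)} is infinite. -/

import Mathlib

open MeasureTheory
open scoped FourierTransform ENNReal NNReal

open Filter Function Set Topology
open scoped InnerProductSpace SchwartzMap

/-!
Let `E` be the product of `d` copies of a Cantor-type set of reals whose binary digits are free
except for triples of forced zeros at positions `n₀ < n₁ < ⋯`. For `ξ ∈ E` each `2 ^ nₖ * ξ₀` is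
within `1 / 8` of an integer, so translating a small bump `g` by `2 ^ nₖ • e₀` multiplies `𝓕 g ξ` by
a phase with real part at least `1 / 2`. Hence the Fourier transform of the sum of `K` such
translates has size at least `c * K` on `E`, whereas disjointness of the supports makes its
`L^p` norm equal to `K ^ (1 / p) * ‖g‖_p`; as `p > 1`, letting `K → ∞` rules out any estimate.

Only about `3 * √j` zeros are forced before the `j`-th free digit. Rereading the free digits as a
full binary expansion is therefore Hölder of every exponent `s < 1`, and it maps the Cantor-type
set onto `[0, 1]`, which forces full dimension.
-/

theorem half_le_cos_two_pi_mul {t : ℝ} (ht : |t| ≤ 1 / 6) : 1 / 2 ≤ Real.cos (2 * Real.pi * t) := by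
  rw [← Real.cos_pi_div_three, ← Real.cos_abs (2 * Real.pi * t), abs_mul,
    abs_of_pos Real.two_pi_pos]
  have hπ := Real.pi_pos
  apply Real.cos_le_cos_of_nonneg_of_le_pi (by positivity) <;> nlinarith

section Digits

variable {b : ℕ}

theorem exists_nat_pow_mul_ofDigits_eq (a : ℕ → Fin b) (n : ℕ) :
    ∃ z : ℕ, (b : ℝ) ^ n * Real.ofDigits a = z + Real.ofDigits fun i ↦ a (i + n) := by
  have hb : (b : ℝ) ≠ 0 := mod_cast (Fin.pos (a 0)).ne'
  refine ⟨∑ i ∈ Finset.range n, a i * b ^ (n - (i + 1)), ?_⟩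
  rw [Real.ofDigits_eq_sum_add_ofDigits a n, mul_add, Finset.mul_sum,
    mul_inv_cancel_left₀ (pow_ne_zero n hb)]
  push_cast
  congr 1
  refine Finset.sum_congr rfl fun i hi ↦ ?_
  rw [pow_sub₀ _ hb (Finset.mem_range.1 hi), Real.ofDigitsTerm, mul_left_comm]

theorem ofDigits_le_inv_pow [NeZero b] {a : ℕ → Fin b} {n : ℕ} (h : ∀ i < n, a i = 0) :
    Real.ofDigits a ≤ ((b : ℝ) ^ n)⁻¹ := by
  have h_zero : Real.ofDigits (0 : ℕ → Fin b) = 0 := by simp [Real.ofDigits, Real.ofDigitsTerm]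
  simpa [h_zero, abs_of_nonneg (Real.ofDigits_nonneg a)] using
    Real.abs_ofDigits_sub_ofDigits_le (y := 0) h

-- Raising the `n`-th digit by one still yields a digit expansion, which is at most `1`.
theorem ofDigits_add_inv_pow_le_one {a : ℕ → Fin b} {n : ℕ} (h : (a n : ℕ) + 1 < b) :
    Real.ofDigits a + ((b : ℝ) ^ (n + 1))⁻¹ ≤ 1 := by
  have h_update : Real.ofDigitsTerm (update a n ⟨a n + 1, h⟩) =
      update (Real.ofDigitsTerm a) n (((a n : ℕ) + 1) * ((b : ℝ) ^ (n + 1))⁻¹) := by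
    ext i
    rcases eq_or_ne i n with rfl | hi <;> simp [Real.ofDigitsTerm, *]
  have h_sum := (Real.summable_ofDigitsTerm (digits := a)).hasSum.update n
    (((a n : ℕ) + 1) * ((b : ℝ) ^ (n + 1))⁻¹)
  calc Real.ofDigits a + ((b : ℝ) ^ (n + 1))⁻¹
      = Real.ofDigits (update a n ⟨a n + 1, h⟩) := by
        rw [Real.ofDigits.eq_def (update _ _ _), h_update, h_sum.tsum_eq, Real.ofDigitsTerm,
          Real.ofDigits]
        ring
    _ ≤ 1 := Real.ofDigits_le_one _

theorem ofDigits_add_inv_pow_le_ofDigits {a a' : ℕ → Fin b} {m n : ℕ}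
    (h_agree : ∀ i < m, a i = a' i) (h_lt : a m < a' m) (hmn : m < n) (hn : (a n : ℕ) + 1 < b) :
    Real.ofDigits a + ((b : ℝ) ^ (n + 1))⁻¹ ≤ Real.ofDigits a' := by
  obtain ⟨k, rfl⟩ := Nat.exists_eq_add_of_lt hmn
  have hb : (0 : ℝ) < b := mod_cast (Fin.pos (a 0))
  have h_prefix : ∑ i ∈ Finset.range m, Real.ofDigitsTerm a i =
      ∑ i ∈ Finset.range m, Real.ofDigitsTerm a' i :=
    Finset.sum_congr rfl fun i hi ↦ by
      simp only [Real.ofDigitsTerm, h_agree i (Finset.mem_range.1 hi)]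
  have h_digit : ((a m : ℕ) : ℝ) + 1 ≤ (a' m : ℕ) := mod_cast h_lt
  have h_tail : Real.ofDigits (fun i ↦ a (i + (m + 1))) + ((b : ℝ) ^ (k + 1))⁻¹ ≤ 1 :=
    ofDigits_add_inv_pow_le_one (by convert hn using 4; ring)
  have h_tail' := Real.ofDigits_nonneg fun i ↦ a' (i + (m + 1))
  rw [Real.ofDigits_eq_sum_add_ofDigits a (m + 1), Real.ofDigits_eq_sum_add_ofDigits a' (m + 1),
    Finset.sum_range_succ, Finset.sum_range_succ, h_prefix, Real.ofDigitsTerm, Real.ofDigitsTerm,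
    show m + k + 1 + 1 = (m + 1) + (k + 1) by ring, pow_add _ (m + 1), mul_inv]
  have h_pos : (0 : ℝ) < ((b : ℝ) ^ (m + 1))⁻¹ := by positivity
  nlinarith

theorem inv_pow_le_abs_ofDigits_sub_ofDigits {a a' : ℕ → Fin b} {m n : ℕ}
    (h_agree : ∀ i < m, a i = a' i) (h_ne : a m ≠ a' m) (hmn : m < n)
    (hn : (a n : ℕ) + 1 < b) (hn' : (a' n : ℕ) + 1 < b) :
    ((b : ℝ) ^ (n + 1))⁻¹ ≤ |Real.ofDigits a - Real.ofDigits a'| := by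
  rcases h_ne.lt_or_gt with h_lt | h_lt
  · have := ofDigits_add_inv_pow_le_ofDigits h_agree h_lt hmn hn
    exact le_abs.2 (.inr (by linarith))
  · have := ofDigits_add_inv_pow_le_ofDigits (fun i hi ↦ (h_agree i hi).symm) h_lt hmn hn'
    exact le_abs.2 (.inl (by linarith))

end Digits

section GapSet

/-- The position of the `j`-th free binary digit of a point of `gapSet`: the free digits come in
blocks indexed by `k`, the `k`-th of which holds those with `k ^ 2 ≤ j < (k + 1) ^ 2`, and
consecutive blocks are separated by three forced zeros. -/
def freePosition (j : ℕ) : ℕ := j + 3 * j.sqrt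

/-- The first of the three forced zero digits that follow the `k`-th block of free digits. -/
def gapPosition (k : ℕ) : ℕ := (k + 1) ^ 2 + 3 * k

theorem freePosition_strictMono : StrictMono freePosition :=
  strictMono_id.add_monotone fun _ _ h ↦ Nat.mul_le_mul_left 3 (Nat.sqrt_le_sqrt h)

theorem gapPosition_strictMono : StrictMono gapPosition :=
  strictMono_nat_of_lt_succ fun k ↦ by
    unfold gapPosition
    nlinarith

theorem one_le_dist_two_pow_gapPosition {k l : ℕ} (hkl : k ≠ l) :
    1 ≤ dist ((2 : ℝ) ^ gapPosition k) (2 ^ gapPosition l) := by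
  have h_ne : 2 ^ gapPosition k ≠ 2 ^ gapPosition l :=
    (Nat.pow_right_injective le_rfl).ne (gapPosition_strictMono.injective.ne hkl)
  have h : 1 ≤ dist (2 ^ gapPosition k) (2 ^ gapPosition l) := Nat.pairwise_one_le_dist h_ne
  rw [← Nat.dist_cast_real] at h
  exact_mod_cast h

theorem freePosition_lt_gapPosition (j : ℕ) : freePosition j < gapPosition j.sqrt := by
  have : j < (j.sqrt + 1) ^ 2 := Nat.lt_succ_sqrt' j
  unfold freePosition gapPosition
  omega

theorem gapPosition_add_notMem_range_freePosition {k i : ℕ} (hi : i < 3) :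
    gapPosition k + i ∉ range freePosition := by
  rintro ⟨j, hj⟩
  unfold freePosition gapPosition at hj
  rcases lt_or_ge j ((k + 1) ^ 2) with hjk | hjk
  · have := Nat.sqrt_lt'.2 hjk
    omega
  · have := Nat.le_sqrt'.2 hjk
    omega

/-- The binary expansion with the digits `a` at the free positions and `0` elsewhere. -/
noncomputable def spreadDigits (a : ℕ → Fin 2) : ℕ → Fin 2 :=
  extend freePosition a fun _ ↦ 0

theorem spreadDigits_freePosition (a : ℕ → Fin 2) (j : ℕ) :
    spreadDigits a (freePosition j) = a j :=
  freePosition_strictMono.injective.extend_apply a _ j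

theorem spreadDigits_eq_zero (a : ℕ → Fin 2) {n : ℕ} (hn : n ∉ range freePosition) :
    spreadDigits a n = 0 :=
  extend_apply' a _ n hn

theorem continuous_spreadDigits : Continuous spreadDigits := by
  refine continuous_pi fun n ↦ ?_
  by_cases hn : n ∈ range freePosition
  · obtain ⟨j, rfl⟩ := hn
    simpa only [spreadDigits_freePosition] using continuous_apply j
  · simpa only [spreadDigits_eq_zero _ hn] using continuous_const

theorem spreadDigits_eq_of_lt_freePosition {a a' : ℕ → Fin 2} {j : ℕ}
    (h : ∀ i < j, a i = a' i) : ∀ n < freePosition j, spreadDigits a n = spreadDigits a' n := by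
  intro n hn
  by_cases hn' : n ∈ range freePosition
  · obtain ⟨i, rfl⟩ := hn'
    simpa only [spreadDigits_freePosition] using h i (freePosition_strictMono.lt_iff_lt.1 hn)
  · rw [spreadDigits_eq_zero a hn', spreadDigits_eq_zero a' hn']

/-- The point of the Cantor-type set `gapSet` whose free binary digits are `a`. -/
noncomputable def gapPoint (a : ℕ → Fin 2) : ℝ := Real.ofDigits (spreadDigits a)

/-- The compact set of reals in `[0, 1]` whose binary digits vanish outside the free positions. -/
def gapSet : Set ℝ := range gapPoint

theorem isCompact_gapSet : IsCompact gapSet :=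
  isCompact_range (Real.continuous_ofDigits.comp continuous_spreadDigits)

theorem half_le_cos_two_pi_mul_of_mem_gapSet {x : ℝ} (hx : x ∈ gapSet) (k : ℕ) :
    1 / 2 ≤ Real.cos (2 * Real.pi * (2 ^ gapPosition k * x)) := by
  obtain ⟨a, rfl⟩ := hx
  obtain ⟨z, hz⟩ := exists_nat_pow_mul_ofDigits_eq (spreadDigits a) (gapPosition k)
  set t := Real.ofDigits fun i ↦ spreadDigits a (i + gapPosition k)
  have ht : t ≤ ((2 : ℕ) ^ 3 : ℝ)⁻¹ := ofDigits_le_inv_pow fun i hi ↦ by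
    rw [add_comm]
    exact spreadDigits_eq_zero a (gapPosition_add_notMem_range_freePosition hi)
  have ht_abs : |t| ≤ 1 / 6 := by
    rw [abs_of_nonneg (Real.ofDigits_nonneg _)]
    norm_num at ht ⊢
    linarith
  rw [gapPoint, ← Nat.cast_ofNat (R := ℝ) (n := 2), hz, Nat.cast_ofNat, mul_add, add_comm,
    mul_comm _ (z : ℝ), Real.cos_add_nat_mul_two_pi]
  exact half_le_cos_two_pi_mul ht_abs

theorem inv_pow_le_abs_gapPoint_sub_gapPoint {a a' : ℕ → Fin 2} {j : ℕ}
    (h_agree : ∀ i < j, a i = a' i) (h_ne : a j ≠ a' j) :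
    ((2 : ℝ) ^ (gapPosition j.sqrt + 1))⁻¹ ≤ |gapPoint a - gapPoint a'| := by
  have h_zero (c : ℕ → Fin 2) : spreadDigits c (gapPosition j.sqrt) = 0 :=
    spreadDigits_eq_zero c (gapPosition_add_notMem_range_freePosition (i := 0) (by norm_num))
  refine inv_pow_le_abs_ofDigits_sub_ofDigits (spreadDigits_eq_of_lt_freePosition h_agree) ?_
    (freePosition_lt_gapPosition j) ?_ ?_
  · simpa only [spreadDigits_freePosition] using h_ne
  all_goals simp [h_zero]

theorem exists_mul_gapPosition_sqrt_le {s : ℝ} (hs1 : s < 1) :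
    ∃ c : ℝ, ∀ j : ℕ, s * (gapPosition j.sqrt + 1 : ℕ) ≤ j + c := by
  refine ⟨25 / (4 * (1 - s)) + 2, fun j ↦ ?_⟩
  set r := j.sqrt
  have hs : 0 < 1 - s := by linarith
  have hr : (r : ℝ) ^ 2 ≤ j := mod_cast Nat.sqrt_le' j
  -- Since `gapPosition r + 1 = r ^ 2 + 5 * r + 2`, completing the square gives the constant.
  have h_square : (1 - s) * (r : ℝ) ^ 2 + 25 / (4 * (1 - s)) - 5 * r =
      (2 * (1 - s) * r - 5) ^ 2 / (4 * (1 - s)) := by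
    field_simp
    ring
  have h_nonneg : 0 ≤ (2 * (1 - s) * r - 5) ^ 2 / (4 * (1 - s)) := by positivity
  have h_linear : s * (5 * r + 2) ≤ 5 * r + 2 := mul_le_of_le_one_left (by positivity) hs1.le
  rw [gapPosition]
  push_cast
  linarith

theorem exists_dist_ofDigits_le_mul_dist_gapPoint_rpow {s : ℝ} (hs0 : 0 ≤ s) (hs1 : s < 1) :
    ∃ C : ℝ, ∀ a a' : ℕ → Fin 2,
      dist (Real.ofDigits a) (Real.ofDigits a') ≤ C * dist (gapPoint a) (gapPoint a') ^ s := by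
  classical
  obtain ⟨c, hc⟩ := exists_mul_gapPosition_sqrt_le hs1
  refine ⟨2 ^ c, fun a a' ↦ ?_⟩
  rcases eq_or_ne a a' with rfl | h_ne
  · rw [dist_self]
    positivity
  have h_exists := ne_iff.1 h_ne
  set j := Nat.find h_exists
  have h_agree : ∀ i < j, a i = a' i := fun i hi ↦ not_not.1 (Nat.find_min h_exists hi)
  set n := gapPosition j.sqrt + 1
  calc dist (Real.ofDigits a) (Real.ofDigits a')
      ≤ ((2 : ℝ) ^ j)⁻¹ := Real.abs_ofDigits_sub_ofDigits_le h_agree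
    _ = 2 ^ (-j : ℝ) := by rw [Real.rpow_neg zero_le_two, Real.rpow_natCast]
    _ ≤ 2 ^ (c + -(n : ℝ) * s) :=
        Real.rpow_le_rpow_of_exponent_le one_le_two (by linarith [hc j])
    _ = 2 ^ c * (((2 : ℝ) ^ n)⁻¹) ^ s := by
        rw [Real.rpow_add two_pos, Real.rpow_mul zero_le_two, Real.rpow_neg zero_le_two,
          Real.rpow_natCast]
    _ ≤ 2 ^ c * dist (gapPoint a) (gapPoint a') ^ s := by
        gcongr
        exact inv_pow_le_abs_gapPoint_sub_gapPoint h_agree (Nat.find_spec h_exists)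

end GapSet

section Dimension

variable {α ι X Y : Type*} [Fintype ι]

theorem dimH_range_le_of_dist_le [MetricSpace X] [MetricSpace Y] {F : α → X} {G : α → Y}
    {C s : ℝ≥0} (hs : 0 < s) (h : ∀ a a', dist (G a) (G a') ≤ C * dist (F a) (F a') ^ (s : ℝ)) :
    dimH (range G) ≤ dimH (range F) / s := by
  have h_edist (a a' : α) : edist (G a) (G a') ≤ C * edist (F a) (F a') ^ (s : ℝ) := by
    have h_nndist : nndist (G a) (G a') ≤ C * nndist (F a) (F a') ^ (s : ℝ) := mod_cast h a a'
    rw [edist_nndist, edist_nndist, ← ENNReal.coe_rpow_of_nonneg _ s.coe_nonneg]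
    exact_mod_cast h_nndist
  rcases isEmpty_or_nonempty α with _ | _
  · simp [range_eq_empty]
  have h_factor (a : α) : G (invFun F (F a)) = G a := by
    have := h_edist (invFun F (F a)) a
    rwa [invFun_eq (f := F) ⟨a, rfl⟩, edist_self, ENNReal.zero_rpow_of_pos (mod_cast hs), mul_zero,
      nonpos_iff_eq_zero, edist_eq_zero] at this
  have h_holder : HolderOnWith C s (G ∘ invFun F) (range F) := by
    rintro _ ⟨a, rfl⟩ _ ⟨a', rfl⟩
    simpa only [comp_apply, h_factor] using h_edist a a'
  convert h_holder.dimH_image_le hs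
  rw [← range_comp]
  exact congrArg range (funext fun a ↦ (h_factor a).symm)

theorem dist_piMap_le_mul_dist_piMap_rpow [PseudoMetricSpace X] [PseudoMetricSpace Y]
    {F : α → X} {G : α → Y} {C s : ℝ} (hC : 0 ≤ C) (hs : 0 ≤ s)
    (h : ∀ a a', dist (G a) (G a') ≤ C * dist (F a) (F a') ^ s) (a a' : ι → α) :
    dist (Pi.map (fun _ ↦ G) a) (Pi.map (fun _ ↦ G) a') ≤
      C * dist (Pi.map (fun _ ↦ F) a) (Pi.map (fun _ ↦ F) a') ^ s := by
  refine (dist_pi_le_iff (by positivity)).2 fun i ↦ (h (a i) (a' i)).trans ?_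
  gcongr
  exact dist_le_pi_dist (Pi.map (fun _ ↦ F) a) (Pi.map (fun _ ↦ F) a') i

theorem dimH_pi_range_eq_card {F G : α → ℝ} (hG : (interior (range G)).Nonempty)
    (h : ∀ s : ℝ, 0 < s → s < 1 →
      ∃ C : ℝ, ∀ a a', dist (G a) (G a') ≤ C * dist (F a) (F a') ^ s) :
    dimH (univ.pi fun _ : ι ↦ range F) = Fintype.card ι := by
  refine le_antisymm ((dimH_mono (subset_univ _)).trans_eq (Real.dimH_univ_pi ι)) ?_
  have h_dimG : dimH (range (Pi.map fun _ : ι ↦ G)) = Fintype.card ι := by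
    rw [Real.dimH_of_nonempty_interior, Module.finrank_fintype_fun_eq_card]
    rw [range_piMap, interior_pi_set finite_univ]
    exact univ_pi_nonempty_iff.2 fun _ ↦ hG
  refine ENNReal.le_of_forall_lt_one_mul_le fun s hs ↦ ?_
  lift s to ℝ≥0 using (hs.trans ENNReal.one_lt_top).ne
  rcases eq_or_ne s 0 with rfl | hs0
  · simp
  replace hs0 : 0 < s := pos_iff_ne_zero.2 hs0
  obtain ⟨C, hC⟩ := h s hs0 (mod_cast hs)
  have h_holder : ∀ a a' : ι → α, _ :=
    dist_piMap_le_mul_dist_piMap_rpow C.toNNReal.coe_nonneg s.coe_nonneg fun a a' ↦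
      (hC a a').trans (mul_le_mul_of_nonneg_right (Real.le_coe_toNNReal C) (by positivity))
  have h_le := dimH_range_le_of_dist_le hs0 h_holder
  rwa [h_dimG, range_piMap, ENNReal.le_div_iff_mul_le (.inl (mod_cast hs0.ne'))
    (.inl ENNReal.coe_ne_top), mul_comm] at h_le

theorem dimH_pi_gapSet : dimH (univ.pi fun _ : ι ↦ gapSet) = Fintype.card ι := by
  refine dimH_pi_range_eq_card ?_ fun _ hs0 ↦
    exists_dist_ofDigits_le_mul_dist_gapPoint_rpow hs0.le
  have h_Icc : Icc 0 1 ⊆ range (Real.ofDigits (b := 2)) :=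
    image_univ ▸ Real.ofDigits_SurjOn one_lt_two
  have h_Ioo : (Ioo (0 : ℝ) 1).Nonempty := nonempty_Ioo.2 one_pos
  exact (interior_Icc (a := (0 : ℝ)) ▸ h_Ioo).mono (interior_mono h_Icc)

end Dimension

section LpNorm

variable {α κ F : Type*} [NormedAddCommGroup F] {s : Finset κ} {f : κ → α → F}

theorem sum_apply_eq_zero_or_exists_eq
    (h_disj : (s : Set κ).PairwiseDisjoint fun k ↦ support (f k)) (x : α) :
    ∑ k ∈ s, f k x = 0 ∨ ∃ k ∈ s, ∑ l ∈ s, f l x = f k x := by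
  refine or_iff_not_imp_left.2 fun h_ne ↦ ?_
  obtain ⟨k, hk, hkx⟩ := Finset.exists_ne_zero_of_sum_ne_zero h_ne
  refine ⟨k, hk, Finset.sum_eq_single_of_mem k hk fun l hl hlk ↦ ?_⟩
  by_contra hlx
  exact (h_disj hl hk hlk).le_bot ⟨hlx, hkx⟩

variable [MeasurableSpace α] {μ : Measure α} {p q B : ℝ≥0∞}

theorem eLpNorm_top_sum_le_of_pairwiseDisjoint_support
    (h_disj : (s : Set κ).PairwiseDisjoint fun k ↦ support (f k))
    (h_le : ∀ k ∈ s, eLpNorm (f k) ∞ μ ≤ B) : eLpNorm (fun x ↦ ∑ k ∈ s, f k x) ∞ μ ≤ B := by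
  have h_ae : ∀ᵐ x ∂μ, ∀ k ∈ s, ‖f k x‖ₑ ≤ B :=
    (ae_ball_iff s.countable_toSet).2 fun k hk ↦
      (enorm_ae_le_eLpNormEssSup (f k) μ).mono fun x hx ↦
        hx.trans (eLpNorm_exponent_top (f := f k) ▸ h_le k hk)
  refine eLpNormEssSup_le_of_ae_enorm_bound (h_ae.mono fun x hx ↦ ?_)
  rcases sum_apply_eq_zero_or_exists_eq h_disj x with h_zero | ⟨k, hk, h_eq⟩
  · simp [h_zero]
  · exact h_eq ▸ hx k hk

theorem eLpNorm_sum_le_of_pairwiseDisjoint_support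
    (h_meas : ∀ k ∈ s, AEStronglyMeasurable (f k) μ)
    (h_disj : (s : Set κ).PairwiseDisjoint fun k ↦ support (f k))
    (h_le : ∀ k ∈ s, eLpNorm (f k) p μ ≤ B) :
    eLpNorm (fun x ↦ ∑ k ∈ s, f k x) p μ ≤ (s.card : ℝ≥0∞) ^ (1 / p.toReal) * B := by
  rcases eq_or_ne p 0 with rfl | hp0
  · simp
  rcases eq_or_ne p ∞ with rfl | hp_top
  · simpa using eLpNorm_top_sum_le_of_pairwiseDisjoint_support h_disj h_le
  have hp := ENNReal.toReal_pos hp0 hp_top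
  have h_rpow {g : α → F} {A : ℝ≥0∞} :
      eLpNorm g p μ ≤ A ↔ ∫⁻ x, ‖g x‖ₑ ^ p.toReal ∂μ ≤ A ^ p.toReal := by
    rw [eLpNorm_eq_lintegral_rpow_enorm_toReal hp0 hp_top, one_div, ENNReal.rpow_inv_le_iff hp]
  rw [h_rpow, ENNReal.mul_rpow_of_nonneg _ _ hp.le, ← ENNReal.rpow_mul, one_div,
    inv_mul_cancel₀ hp.ne', ENNReal.rpow_one]
  calc ∫⁻ x, ‖∑ k ∈ s, f k x‖ₑ ^ p.toReal ∂μ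
      ≤ ∫⁻ x, ∑ k ∈ s, ‖f k x‖ₑ ^ p.toReal ∂μ := by
        refine lintegral_mono fun x ↦ ?_
        rcases sum_apply_eq_zero_or_exists_eq h_disj x with h_zero | ⟨k, hk, h_eq⟩
        · simp [h_zero, hp]
        · simp only [h_eq]
          exact Finset.single_le_sum (f := fun k ↦ ‖f k x‖ₑ ^ p.toReal) (fun _ _ ↦ zero_le) hk
    _ = ∑ k ∈ s, ∫⁻ x, ‖f k x‖ₑ ^ p.toReal ∂μ :=
        lintegral_finsetSum' _ fun _ hk ↦ (h_meas _ hk).enorm.pow_const _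
    _ ≤ ∑ _ ∈ s, B ^ p.toReal := Finset.sum_le_sum fun k hk ↦ h_rpow.1 (h_le k hk)
    _ = s.card * B ^ p.toReal := by rw [Finset.sum_const, nsmul_eq_mul]

theorem ofReal_mul_measure_rpow_le_eLpNorm {g : α → F} {E : Set α} {a : ℝ}
    (hE : MeasurableSet E) (hμE : μ E ≠ 0) (hq : q ≠ 0) (ha : 0 ≤ a) (h : ∀ x ∈ E, a ≤ ‖g x‖) :
    ENNReal.ofReal a * μ E ^ (1 / q.toReal) ≤ eLpNorm g q μ := by
  rw [← Real.enorm_of_nonneg ha, ← eLpNorm_indicator_const' hE hμE hq]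
  refine eLpNorm_mono fun x ↦ ?_
  by_cases hx : x ∈ E
  · simpa [hx, abs_of_nonneg ha] using h x hx
  · simp [hx]

theorem exists_mul_natCast_rpow_lt_natCast_mul {A B : ℝ≥0∞} (hA : A ≠ 0) (hB : B ≠ ∞) {r : ℝ}
    (hr : r < 1) : ∃ K : ℕ, B * (K : ℝ≥0∞) ^ r < K * A := by
  have h_tendsto : Tendsto (fun K : ℕ ↦ (K : ℝ≥0∞) ^ (1 - r)) atTop (𝓝 ∞) :=
    (ENNReal.tendsto_rpow_at_top (sub_pos.2 hr)).comp ENNReal.tendsto_nat_nhds_top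
  obtain ⟨K, hK, hK_pos⟩ :=
    ((h_tendsto.eventually_const_lt (ENNReal.div_lt_top hB hA)).and (eventually_gt_atTop 0)).exists
  have hK0 : (K : ℝ≥0∞) ≠ 0 := mod_cast hK_pos.ne'
  have hK_top : (K : ℝ≥0∞) ≠ ∞ := ENNReal.natCast_ne_top K
  refine ⟨K, ?_⟩
  calc B * (K : ℝ≥0∞) ^ r
      < K ^ (1 - r) * A * K ^ r :=
        ENNReal.mul_lt_mul_left (ENNReal.rpow_pos (mod_cast hK_pos) hK_top).ne'
          (ENNReal.rpow_ne_top_of_ne_zero hK0 hK_top)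
          ((ENNReal.div_lt_iff (.inl hA) (.inr hB)).1 hK)
    _ = K * A := by
        rw [mul_right_comm, ← ENNReal.rpow_add _ _ hK0 hK_top, sub_add_cancel, ENNReal.rpow_one]

end LpNorm

section Fourier

variable {V : Type*} [NormedAddCommGroup V] [InnerProductSpace ℝ V] [FiniteDimensional ℝ V]
  [MeasurableSpace V] [BorelSpace V]

theorem fourier_compSubConstCLM (g : 𝓢(V, ℂ)) (a ξ : V) :
    𝓕 (g.compSubConstCLM ℂ a) ξ =
      Complex.exp ((2 * Real.pi * -⟪a, ξ⟫_ℝ : ℝ) * Complex.I) * 𝓕 g ξ := by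
  have := congrFun (VectorFourier.fourierIntegral_comp_add_right Real.fourierChar
    (volume : Measure V) (innerₗ V) g (-a)) ξ
  simp only [Circle.smul_def, Real.fourierChar_apply, innerₗ_apply_apply, inner_neg_left] at this
  have h_coe : ⇑(g.compSubConstCLM ℂ a) = g ∘ fun x ↦ x + -a :=
    funext fun x ↦ by simp [sub_eq_add_neg]
  rw [SchwartzMap.fourier_coe, SchwartzMap.fourier_coe, h_coe]
  exact this

theorem norm_fourier_sum_compSubConstCLM (g : 𝓢(V, ℂ)) {κ : Type*} (s : Finset κ) (v : κ → V)
    {ξ : V}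
    (h_cos : ∀ k ∈ s, 1 / 2 ≤ Real.cos (2 * Real.pi * ⟪v k, ξ⟫_ℝ)) :
    s.card * (‖𝓕 g ξ‖ / 2) ≤ ‖𝓕 (∑ k ∈ s, g.compSubConstCLM ℂ (v k)) ξ‖ := by
  have h_sum : 𝓕 (∑ k ∈ s, g.compSubConstCLM ℂ (v k)) ξ =
      (∑ k ∈ s, Complex.exp ((2 * Real.pi * -⟪v k, ξ⟫_ℝ : ℝ) * Complex.I)) * 𝓕 g ξ := by
    rw [← FourierTransform.fourierCLM_apply (R := ℂ), map_sum, sum_apply,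
      Finset.sum_mul]
    exact Finset.sum_congr rfl fun k _ ↦ fourier_compSubConstCLM g (v k) ξ
  have h_phases : (s.card : ℝ) * (1 / 2) ≤
      ‖∑ k ∈ s, Complex.exp ((2 * Real.pi * -⟪v k, ξ⟫_ℝ : ℝ) * Complex.I)‖ := by
    refine le_trans ?_ (Complex.re_le_norm _)
    rw [Complex.re_sum, ← nsmul_eq_mul]
    refine Finset.card_nsmul_le_sum _ _ _ fun k hk ↦ ?_
    rw [Complex.exp_ofReal_mul_I_re, mul_neg, Real.cos_neg]
    exact h_cos k hk
  rw [h_sum, norm_mul]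
  calc s.card * (‖𝓕 g ξ‖ / 2) = s.card * (1 / 2) * ‖𝓕 g ξ‖ := by ring
    _ ≤ _ := by gcongr

theorem re_fourier_ofReal {φ : V → ℝ} (hφ : Integrable φ) (ξ : V) :
    (𝓕 (fun x ↦ (φ x : ℂ)) ξ).re = ∫ x, Real.cos (2 * Real.pi * ⟪x, ξ⟫_ℝ) * φ x := by
  have h_int := (Real.fourierIntegral_convergent_iff (μ := volume) ξ).2 (hφ.ofReal (𝕜 := ℂ))
  rw [Real.fourier_eq]
  refine (integral_re h_int).symm.trans (integral_congr_ae (.of_forall fun x ↦ ?_))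
  simp only [Circle.smul_def, Real.fourierChar_apply, smul_eq_mul, RCLike.re_to_complex,
    RCLike.ofReal_eq_complex_ofReal, Complex.re_mul_ofReal, Complex.exp_ofReal_mul_I_re, mul_neg,
    Real.cos_neg]

theorem half_integral_le_norm_fourier {φ : V → ℝ} (hφ : Integrable φ) (hφ0 : ∀ x, 0 ≤ φ x) {ξ : V}
    (h_supp : ∀ x ∈ support φ, |⟪x, ξ⟫_ℝ| ≤ 1 / 6) :
    (∫ x, φ x) / 2 ≤ ‖𝓕 (fun x ↦ (φ x : ℂ)) ξ‖ := by
  have h_int : Integrable fun x ↦ Real.cos (2 * Real.pi * ⟪x, ξ⟫_ℝ) * φ x :=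
    hφ.bdd_mul (c := 1) (by fun_prop) (.of_forall fun x ↦ Real.abs_cos_le_one _)
  calc (∫ x, φ x) / 2 = ∫ x, 1 / 2 * φ x := by rw [integral_const_mul]; ring
    _ ≤ ∫ x, Real.cos (2 * Real.pi * ⟪x, ξ⟫_ℝ) * φ x := by
        refine integral_mono (hφ.const_mul _) h_int fun x ↦ ?_
        by_cases hx : φ x = 0
        · simp [hx]
        · exact mul_le_mul_of_nonneg_right (half_le_cos_two_pi_mul (h_supp x hx)) (hφ0 x)
    _ = (𝓕 (fun x ↦ (φ x : ℂ)) ξ).re := (re_fourier_ofReal hφ ξ).symm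
    _ ≤ ‖𝓕 (fun x ↦ (φ x : ℂ)) ξ‖ := Complex.re_le_norm _

theorem exists_schwartzMap_support_subset_ball_forall_le_norm_fourier {r R : ℝ} (hr : 0 < r)
    (hR : 0 < R) : ∃ g : 𝓢(V, ℂ), support g ⊆ Metric.ball 0 r ∧
      ∃ c > 0, ∀ ξ : V, ‖ξ‖ ≤ R → c ≤ ‖𝓕 g ξ‖ := by
  set ρ := min r (1 / (6 * R))
  have hρ : 0 < ρ := by positivity
  have hρR : ρ * R ≤ 1 / 6 :=
    (mul_le_mul_of_nonneg_right (min_le_right r (1 / (6 * R))) hR.le).trans_eq (by field)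
  let φ : ContDiffBump (0 : V) := ⟨ρ / 2, ρ, by positivity, by linarith⟩
  let g : 𝓢(V, ℂ) := (φ.hasCompactSupport.comp_left Complex.ofReal_zero).toSchwartzMap
    (Complex.ofRealCLM.contDiff.comp φ.contDiff)
  refine ⟨g, fun x hx ↦ ?_, (∫ x, φ x) / 2, half_pos φ.integral_pos, fun ξ hξ ↦ ?_⟩
  · have hxφ : x ∈ support φ := fun h ↦ hx (congrArg Complex.ofReal h)
    rw [φ.support_eq] at hxφ
    exact Metric.ball_subset_ball (min_le_left _ _) hxφ
  · refine half_integral_le_norm_fourier φ.integrable (fun _ ↦ φ.nonneg) fun x hx ↦ ?_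
    rw [φ.support_eq, mem_ball_zero_iff] at hx
    calc |⟪x, ξ⟫_ℝ| ≤ ‖x‖ * ‖ξ‖ := abs_real_inner_le_norm x ξ
      _ ≤ ρ * R := by gcongr
      _ ≤ 1 / 6 := hρR

theorem eLpNorm_compSubConstCLM (g : 𝓢(V, ℂ)) (a : V) (p : ℝ≥0∞) :
    eLpNorm (g.compSubConstCLM ℂ a) p volume = eLpNorm g p volume :=
  eLpNorm_comp_measurePreserving g.continuous.aestronglyMeasurable
    (measurePreserving_sub_right volume a)

theorem eLpNorm_sum_compSubConstCLM_le {g : 𝓢(V, ℂ)} {κ : Type*} {v : κ → V} (s : Finset κ)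
    {r : ℝ} (hg : support g ⊆ Metric.ball 0 r)
    (hv : Pairwise fun k l ↦ 2 * r ≤ dist (v k) (v l)) (p : ℝ≥0∞) :
    eLpNorm (∑ k ∈ s, g.compSubConstCLM ℂ (v k) : 𝓢(V, ℂ)) p volume ≤
      (s.card : ℝ≥0∞) ^ (1 / p.toReal) * eLpNorm g p volume := by
  have h_supp (k : κ) : support (g.compSubConstCLM ℂ (v k)) ⊆ Metric.ball (v k) r := fun x hx ↦ by
    simpa [dist_eq_norm] using hg hx
  have h_disj : (s : Set κ).PairwiseDisjoint fun k ↦ support (g.compSubConstCLM ℂ (v k)) :=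
    fun k _ l _ hkl ↦ (Metric.ball_disjoint_ball (by linarith [hv hkl])).mono (h_supp k) (h_supp l)
  have h_coe : ⇑(∑ k ∈ s, g.compSubConstCLM ℂ (v k)) =
      fun x ↦ ∑ k ∈ s, g.compSubConstCLM ℂ (v k) x := funext fun x ↦ sum_apply ..
  rw [h_coe]
  exact eLpNorm_sum_le_of_pairwiseDisjoint_support
    (fun k _ ↦ (g.compSubConstCLM ℂ (v k)).continuous.aestronglyMeasurable) h_disj
    fun k _ ↦ (eLpNorm_compSubConstCLM g (v k) p).le

/-- The `L^p → L^q(μ)` Fourier restriction estimate, tested on Schwartz functions. -/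
def HasFourierRestriction (p q : ℝ≥0∞) (μ : Measure V) : Prop :=
  ∃ C : ℝ≥0, ∀ f : 𝓢(V, ℂ), eLpNorm (𝓕 ⇑f) q μ ≤ (C : ℝ≥0∞) * eLpNorm (⇑f) p volume

theorem not_hasFourierRestriction_of_half_le_cos {E : Set V} (hE : MeasurableSet E)
    (hE_bdd : Bornology.IsBounded E) {v : ℕ → V} (hv : Pairwise fun k l ↦ 1 ≤ dist (v k) (v l))
    (h_cos : ∀ ξ ∈ E, ∀ k, 1 / 2 ≤ Real.cos (2 * Real.pi * ⟪v k, ξ⟫_ℝ))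
    {μ : Measure V} (hμ : μ E ≠ 0) {p q : ℝ≥0∞} (hp : 1 < p) (hq : q ≠ 0) :
    ¬ HasFourierRestriction p q μ := by
  rintro ⟨C, hC⟩
  obtain ⟨R, hR, hER⟩ := hE_bdd.exists_pos_norm_le
  obtain ⟨g, hg_supp, c, hc, hgc⟩ :=
    exists_schwartzMap_support_subset_ball_forall_le_norm_fourier (V := V) one_half_pos hR
  have h_exponent : 1 / p.toReal < 1 := by
    rcases eq_or_ne p ∞ with rfl | hp_top
    · simp
    · have hp' : 1 < p.toReal := by simpa using ENNReal.toReal_strict_mono hp_top hp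
      exact (div_lt_one (one_pos.trans hp')).2 hp'
  have hμ_pos : μ E ^ (1 / q.toReal) ≠ 0 := by
    simp [ENNReal.rpow_eq_zero_iff, hμ]
  obtain ⟨K, hK⟩ := exists_mul_natCast_rpow_lt_natCast_mul
    (mul_ne_zero (ENNReal.ofReal_pos.2 (half_pos hc)).ne' hμ_pos)
    (ENNReal.mul_ne_top (ENNReal.coe_ne_top (r := C)) (g.memLp p volume).eLpNorm_ne_top) h_exponent
  let f : 𝓢(V, ℂ) := ∑ k ∈ Finset.range K, g.compSubConstCLM ℂ (v k)
  have h_lower : ∀ ξ ∈ E, K * (c / 2) ≤ ‖𝓕 f ξ‖ := fun ξ hξ ↦ by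
    have h := norm_fourier_sum_compSubConstCLM g (Finset.range K) v fun k _ ↦ h_cos ξ hξ k
    rw [Finset.card_range] at h
    refine le_trans ?_ h
    gcongr
    exact hgc ξ (hER ξ hξ)
  refine hK.not_ge ?_
  calc (K : ℝ≥0∞) * (ENNReal.ofReal (c / 2) * μ E ^ (1 / q.toReal))
      = ENNReal.ofReal (K * (c / 2)) * μ E ^ (1 / q.toReal) := by
        rw [ENNReal.ofReal_mul K.cast_nonneg, ENNReal.ofReal_natCast, mul_assoc]
    _ ≤ eLpNorm (𝓕 ⇑f) q μ :=
        ofReal_mul_measure_rpow_le_eLpNorm hE hμ hq (by positivity) h_lower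
    _ ≤ C * eLpNorm f p volume := hC f
    _ ≤ C * ((K : ℝ≥0∞) ^ (1 / p.toReal) * eLpNorm g p volume) := by
        gcongr
        simpa only [Finset.card_range] using
          eLpNorm_sum_compSubConstCLM_le (Finset.range K) hg_supp (v := v) (by simpa using hv) p
    _ = C * eLpNorm g p volume * (K : ℝ≥0∞) ^ (1 / p.toReal) := by ring

variable (V) in
theorem exists_compact_full_dim_no_restriction_general [Nontrivial V] :
    ∃ E : Set V, IsCompact E ∧ dimH E = Module.finrank ℝ V ∧
      ∀ μ : Measure V, μ E ≠ 0 → ∀ p q : ℝ≥0∞, 1 < p → q ≠ 0 → ¬ HasFourierRestriction p q μ := by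
  have b := stdOrthonormalBasis ℝ V
  let e := b.toBasis.equivFunL
  have hE : IsCompact (e ⁻¹' univ.pi fun _ ↦ gapSet) :=
    e.toHomeomorph.isCompact_preimage.2 (isCompact_univ_pi fun _ ↦ isCompact_gapSet)
  refine ⟨_, hE, ?_, fun μ hμ p q hp hq ↦ ?_⟩
  · rw [ContinuousLinearEquiv.dimH_preimage, dimH_pi_gapSet, Fintype.card_fin]
  let i₀ : Fin (Module.finrank ℝ V) := ⟨0, Module.finrank_pos⟩
  refine not_hasFourierRestriction_of_half_le_cos (v := fun k ↦ (2 : ℝ) ^ gapPosition k • b i₀)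
    hE.measurableSet hE.isBounded (fun k l hkl ↦ ?_) (fun ξ hξ k ↦ ?_) hμ hp hq
  · calc (1 : ℝ) ≤ dist ((2 : ℝ) ^ gapPosition k) (2 ^ gapPosition l) :=
          one_le_dist_two_pow_gapPosition hkl
      _ = dist ((2 : ℝ) ^ gapPosition k • b i₀) ((2 : ℝ) ^ gapPosition l • b i₀) := by
          rw [dist_eq_norm, dist_eq_norm, ← sub_smul, norm_smul, b.norm_eq_one, mul_one]
  · have h := half_le_cos_two_pi_mul_of_mem_gapSet (hξ i₀ (mem_univ i₀)) k
    simpa [e, real_inner_smul_left, b.repr_apply_apply] using h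

end Fourier

/-- There exists a compact set `E ⊆ ℝ^d` of full Hausdorff dimension `d` such that for every
Borel measure `μ` with `μ(E) > 0`, every `p ∈ (1,2]` and every `q ∈ [1,∞]`, the supremum over
Schwartz functions of `‖f̂‖_{L^q(μ)} / ‖f‖_{L^p}` is infinite, i.e. no finite constant `C`
satisfies `‖f̂‖_{L^q(μ)} ≤ C ‖f‖_{L^p}` for all Schwartz `f`. -/
theorem exists_compact_full_dim_no_restriction (d : ℕ) (hd : 0 < d) :
    ∃ E : Set (EuclideanSpace ℝ (Fin d)), IsCompact E ∧ dimH E = (d : ℝ≥0∞) ∧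
      ∀ μ : Measure (EuclideanSpace ℝ (Fin d)), 0 < μ E →
        ∀ p q : ℝ≥0∞, 1 < p → p ≤ 2 → 1 ≤ q →
          ¬ ∃ C : ℝ≥0, ∀ f : SchwartzMap (EuclideanSpace ℝ (Fin d)) ℂ,
            eLpNorm (𝓕 ⇑f) q μ ≤ (C : ℝ≥0∞) * eLpNorm (⇑f) p volume := by
  have : NeZero d := ⟨hd.ne'⟩
  obtain ⟨E, hE, h_dim, h⟩ :=
    exists_compact_full_dim_no_restriction_general (EuclideanSpace ℝ (Fin d))
  exact ⟨E, hE, by rwa [finrank_euclideanSpace_fin] at h_dim, fun μ hμ p q hp _ hq ↦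
    h μ hμ.ne' p q hp (one_pos.trans_le hq).ne'⟩
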